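/- arXiv:2512.17265 — 3 statements merged into one kernel-verified Lean document; each statement's English description precedes it below -/
import Mathlib

section
/- Under the hypotheses of the policy-transfer setting (finite MDPs M₁, M₂ with GBSM d^{1-2}, deterministic policy π on M₁, state mapping f : S₂ → S₁, action mapping g : A₁ → A₂, with V₂*, V₂^π, V₁*, V₁^π satisfying their respective Bellman equations), suppose additionally that g is greedy with respect to d^{1-2}, i.e., for every s' ∈ S₂ and a ∈ A₁, δ(d^{1-2})((f(s'),a),(s',g(a))) = min_{a'∈A₂} δ(d^{1-2})((f(s'),a),(s',a')). Then max_{s'∈S₂} |V₂*(s') − V₂^π(s')| ≤ (2/(1−γ))·max_{s'∈S₂} d^{1-2}(f(s'),s') + ((1+γ)/(1−γ))·max_{s∈S₁} |V₁*(s) − V₁^π(s)|. -/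
open scoped BigOperators

noncomputable section

/-- The (finite, linear-programming) 1-Wasserstein distance between probability
vectors `P` on `S₁` and `Q` on `S₂` with cost function `d`. -/
def W1 {S₁ S₂ : Type*} [Fintype S₁] [Fintype S₂]
    (P : S₁ → ℝ) (Q : S₂ → ℝ) (d : S₁ → S₂ → ℝ) : ℝ :=
  sInf { c : ℝ | ∃ lam : S₁ → S₂ → ℝ,
    (∀ i j, 0 ≤ lam i j) ∧ (∀ i, ∑ j, lam i j = P i) ∧
    (∀ j, ∑ i, lam i j = Q j) ∧ c = ∑ i, ∑ j, lam i j * d i j }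

/-- A finite Markov decision process (without its discount factor). -/
structure FinMDP (S A : Type*) [Fintype S] [Fintype A] where
  P : S → A → S → ℝ
  R : S → A → ℝ
  P_nonneg : ∀ s a s', 0 ≤ P s a s'
  P_sum : ∀ s a, ∑ s', P s a s' = 1

variable {S₁ A₁ S₂ A₂ : Type*} [Fintype S₁] [Fintype A₁] [Fintype S₂] [Fintype A₂]

/-- `δ(d)((s,a),(s',a')) = |R₁(s,a) − R₂(s',a')| + γ·W₁(P₁(·|s,a), P₂(·|s',a'); d)` -/
def gbsmDelta (M₁ : FinMDP S₁ A₁) (M₂ : FinMDP S₂ A₂) (γ : ℝ)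
    (d : S₁ → S₂ → ℝ) (s : S₁) (a : A₁) (s' : S₂) (a' : A₂) : ℝ :=
  |M₁.R s a - M₂.R s' a'| + γ * W1 (M₁.P s a) (M₂.P s' a') d

/-- The GBSM operator `F(d)(s,s') = H(X_s, X_{s'}; δ(d))` where `H` is the Hausdorff
metric between the finite sets `X_s = {(s,a)}`, `X_{s'} = {(s',a')}`. -/
def gbsmF (M₁ : FinMDP S₁ A₁) (M₂ : FinMDP S₂ A₂) (γ : ℝ)
    (d : S₁ → S₂ → ℝ) : S₁ → S₂ → ℝ :=
  fun s s' =>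
    max (⨆ a : A₁, ⨅ a' : A₂, gbsmDelta M₁ M₂ γ d s a s' a')
        (⨅ a : A₁, ⨆ a' : A₂, gbsmDelta M₁ M₂ γ d s a s' a')

/-- The GBSM: pointwise supremum of the iterates of `gbsmF` from the zero function. -/
def gbsm (M₁ : FinMDP S₁ A₁) (M₂ : FinMDP S₂ A₂) (γ : ℝ) : S₁ → S₂ → ℝ :=
  fun s s' => ⨆ n : ℕ, (gbsmF M₁ M₂ γ)^[n] (fun _ _ => 0) s s'


section helpers
variable {T₁ B₁ T₂ B₂ : Type*} [Fintype T₁] [Fintype B₁] [Fintype T₂] [Fintype B₂]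

lemma W1_nonempty (P : T₁ → ℝ) (Q : T₂ → ℝ) (hP : ∀ i, 0 ≤ P i) (hQ : ∀ j, 0 ≤ Q j)
    (hP1 : ∑ i, P i = 1) (hQ1 : ∑ j, Q j = 1) (d : T₁ → T₂ → ℝ) :
    { c : ℝ | ∃ lam : T₁ → T₂ → ℝ,
    (∀ i j, 0 ≤ lam i j) ∧ (∀ i, ∑ j, lam i j = P i) ∧
    (∀ j, ∑ i, lam i j = Q j) ∧ c = ∑ i, ∑ j, lam i j * d i j }.Nonempty := by
  refine ⟨_, fun i j => P i * Q j, fun i j => mul_nonneg (hP i) (hQ j), ?_, ?_, rfl⟩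
  · intro i; rw [← Finset.mul_sum, hQ1, mul_one]
  · intro j; rw [← Finset.sum_mul, hP1, one_mul]

lemma coupling_sum_le (P : T₁ → ℝ) (hP1 : ∑ i, P i = 1)
    (lam : T₁ → T₂ → ℝ) (h0 : ∀ i j, 0 ≤ lam i j) (h1 : ∀ i, ∑ j, lam i j = P i)
    (d d' : T₁ → T₂ → ℝ) (ε : ℝ) (h : ∀ i j, d i j ≤ d' i j + ε) :
    ∑ i, ∑ j, lam i j * d i j ≤ (∑ i, ∑ j, lam i j * d' i j) + ε := by
  calc ∑ i, ∑ j, lam i j * d i j ≤ ∑ i, ∑ j, (lam i j * d' i j + lam i j * ε) := by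
        refine Finset.sum_le_sum fun i _ => Finset.sum_le_sum fun j _ => ?_
        rw [← mul_add]
        exact mul_le_mul_of_nonneg_left (h i j) (h0 i j)
    _ = _ := by
        simp only [Finset.sum_add_distrib, ← Finset.sum_mul, h1, hP1, one_mul]

lemma W1_bddBelow (P : T₁ → ℝ) (Q : T₂ → ℝ) (hP1 : ∑ i, P i = 1) (d : T₁ → T₂ → ℝ) :
    BddBelow { c : ℝ | ∃ lam : T₁ → T₂ → ℝ,
    (∀ i j, 0 ≤ lam i j) ∧ (∀ i, ∑ j, lam i j = P i) ∧
    (∀ j, ∑ i, lam i j = Q j) ∧ c = ∑ i, ∑ j, lam i j * d i j } := by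
  obtain ⟨C, hC⟩ := (Set.finite_range (fun p : T₁ × T₂ => - d p.1 p.2)).bddAbove
  refine ⟨-C, ?_⟩
  rintro c ⟨lam, h0, h1, -, rfl⟩
  have := coupling_sum_le P hP1 lam h0 h1 (fun _ _ => 0) d C (fun i j => by
    have := hC ⟨(i, j), rfl⟩
    simp only at this
    linarith)
  simp at this
  linarith

lemma W1_le_add (P : T₁ → ℝ) (Q : T₂ → ℝ) (hP : ∀ i, 0 ≤ P i) (hQ : ∀ j, 0 ≤ Q j)
    (hP1 : ∑ i, P i = 1) (hQ1 : ∑ j, Q j = 1) (d d' : T₁ → T₂ → ℝ) (ε : ℝ)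
    (h : ∀ i j, d i j ≤ d' i j + ε) : W1 P Q d ≤ W1 P Q d' + ε := by
  rw [← sub_le_iff_le_add]
  refine le_csInf (W1_nonempty P Q hP hQ hP1 hQ1 d') ?_
  rintro c ⟨lam, h0, h1, h2, rfl⟩
  rw [sub_le_iff_le_add]
  exact (csInf_le (W1_bddBelow P Q hP1 d) ⟨lam, h0, h1, h2, rfl⟩).trans
    (coupling_sum_le P hP1 lam h0 h1 d d' ε h)

lemma W1_zero (P : T₁ → ℝ) (Q : T₂ → ℝ) (hP : ∀ i, 0 ≤ P i) (hQ : ∀ j, 0 ≤ Q j)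
    (hP1 : ∑ i, P i = 1) (hQ1 : ∑ j, Q j = 1) : W1 P Q (fun _ _ => 0) = 0 := by
  have hne := W1_nonempty P Q hP hQ hP1 hQ1 (fun _ _ => 0)
  apply le_antisymm
  · obtain ⟨c, lam, h0, h1, h2, rfl⟩ := hne
    have := csInf_le (W1_bddBelow P Q hP1 (fun _ _ => 0)) ⟨lam, h0, h1, h2, rfl⟩
    simpa [W1] using this
  · refine le_csInf hne ?_
    rintro c ⟨lam, h0, h1, h2, rfl⟩
    simp

lemma W1_dual (P : T₁ → ℝ) (Q : T₂ → ℝ) (hP : ∀ i, 0 ≤ P i) (hQ : ∀ j, 0 ≤ Q j)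
    (hP1 : ∑ i, P i = 1) (hQ1 : ∑ j, Q j = 1) (d : T₁ → T₂ → ℝ) (ε : ℝ)
    (u : T₁ → ℝ) (v : T₂ → ℝ)
    (h : ∀ i j, |u i - v j| ≤ d i j + ε) :
    |∑ i, P i * u i - ∑ j, Q j * v j| ≤ W1 P Q d + ε := by
  rw [← sub_le_iff_le_add]
  refine le_csInf (W1_nonempty P Q hP hQ hP1 hQ1 d) ?_
  rintro c ⟨lam, h0, h1, h2, rfl⟩
  rw [sub_le_iff_le_add]
  have e : ∑ i, P i * u i - ∑ j, Q j * v j = ∑ i, ∑ j, lam i j * (u i - v j) := by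
    simp only [mul_sub, Finset.sum_sub_distrib]
    congr 1
    · simp only [← Finset.sum_mul, h1]
    · rw [Finset.sum_comm]; simp only [← Finset.sum_mul, h2]
  have h3 := coupling_sum_le P hP1 lam h0 h1 (fun i j => u i - v j) d ε
    (fun i j => (le_abs_self _).trans (h i j))
  have h4 := coupling_sum_le P hP1 lam h0 h1 (fun i j => -(u i - v j)) d ε
    (fun i j => (neg_le_abs _).trans (h i j))
  simp only [mul_neg, Finset.sum_neg_distrib] at h4
  rw [e]
  exact abs_le'.2 ⟨h3, h4⟩

variable (M₁ : FinMDP T₁ B₁) (M₂ : FinMDP T₂ B₂) (γ : ℝ)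

lemma gbsmDelta_le_add (hγ0 : 0 ≤ γ) (d d' : T₁ → T₂ → ℝ) (ε : ℝ)
    (h : ∀ i j, d i j ≤ d' i j + ε) (s : T₁) (a : B₁) (s' : T₂) (a' : B₂) :
    gbsmDelta M₁ M₂ γ d s a s' a' ≤ gbsmDelta M₁ M₂ γ d' s a s' a' + γ * ε := by
  unfold gbsmDelta
  have := W1_le_add _ _ (M₁.P_nonneg s a) (M₂.P_nonneg s' a') (M₁.P_sum s a) (M₂.P_sum s' a')
    d d' ε h
  have := mul_le_mul_of_nonneg_left this hγ0
  linarith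

variable [Nonempty B₁] [Nonempty B₂]

lemma supinf_le_add (c c' : B₁ → B₂ → ℝ) (ε : ℝ) (h : ∀ a b, c a b ≤ c' a b + ε) :
    max (⨆ a, ⨅ b, c a b) (⨅ a, ⨆ b, c a b) ≤
      max (⨆ a, ⨅ b, c' a b) (⨅ a, ⨆ b, c' a b) + ε := by
  apply max_le
  · apply ciSup_le
    intro a
    obtain ⟨b, hb⟩ := exists_eq_ciInf_of_finite (f := fun b => c' a b)
    have h1 : (⨅ b, c a b) ≤ c a b := ciInf_le (Set.finite_range _).bddBelow b
    have h2 := le_ciSup (f := fun a => ⨅ b, c' a b) (Set.finite_range _).bddAbove a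
    have h3 := le_max_left (⨆ a, ⨅ b, c' a b) (⨅ a, ⨆ b, c' a b)
    have h4 := h a b
    linarith
  · obtain ⟨a, ha⟩ := exists_eq_ciInf_of_finite (f := fun a => ⨆ b, c' a b)
    have h1 := ciInf_le (f := fun a => ⨆ b, c a b) (Set.finite_range _).bddBelow a
    have h3 := le_max_right (⨆ a, ⨅ b, c' a b) (⨅ a, ⨆ b, c' a b)
    refine h1.trans (ciSup_le fun b => ?_)
    have h2 := le_ciSup (f := fun b => c' a b) (Set.finite_range _).bddAbove b
    have h4 := h a b
    linarith

lemma gbsmF_le_add (hγ0 : 0 ≤ γ) (d d' : T₁ → T₂ → ℝ) (ε : ℝ)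
    (h : ∀ i j, d i j ≤ d' i j + ε) (s : T₁) (s' : T₂) :
    gbsmF M₁ M₂ γ d s s' ≤ gbsmF M₁ M₂ γ d' s s' + γ * ε :=
  supinf_le_add _ _ _ fun a b => gbsmDelta_le_add M₁ M₂ γ hγ0 d d' ε h s a s' b

lemma gbsm_prefixed (Rbar : ℝ) (hγ0 : 0 ≤ γ) (hγ1 : γ < 1)
    (hR₁ : ∀ s a, 0 ≤ M₁.R s a ∧ M₁.R s a ≤ Rbar)
    (hR₂ : ∀ s a, 0 ≤ M₂.R s a ∧ M₂.R s a ≤ Rbar) (hRbar : 0 < Rbar) (s : T₁) (s' : T₂) :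
    gbsmF M₁ M₂ γ (gbsm M₁ M₂ γ) s s' ≤ gbsm M₁ M₂ γ s s' := by
  set D : ℕ → T₁ → T₂ → ℝ := fun n => (gbsmF M₁ M₂ γ)^[n] (fun _ _ => 0) with hD
  have hsucc : ∀ n, D (n+1) = gbsmF M₁ M₂ γ (D n) := fun n =>
    Function.iterate_succ_apply' _ _ _
  have hδ0 : ∀ s a s' a', gbsmDelta M₁ M₂ γ (fun _ _ => 0) s a s' a' = |M₁.R s a - M₂.R s' a'| := by
    intro s a s' a'
    unfold gbsmDelta
    rw [W1_zero _ _ (M₁.P_nonneg s a) (M₂.P_nonneg s' a') (M₁.P_sum s a) (M₂.P_sum s' a')]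
    simp
  have hF0 : ∀ s s', 0 ≤ gbsmF M₁ M₂ γ (fun _ _ => 0) s s' := by
    intro s s'
    have := supinf_le_add (B₁ := B₁) (B₂ := B₂) (fun _ _ => 0)
      (fun a b => gbsmDelta M₁ M₂ γ (fun _ _ => 0) s a s' b) 0
      (fun a b => by simp only [hδ0, add_zero]; exact abs_nonneg _)
    simpa [gbsmF] using this
  have hF1 : ∀ s s', gbsmF M₁ M₂ γ (fun _ _ => 0) s s' ≤ Rbar := by
    intro s s'
    have := supinf_le_add (B₁ := B₁) (B₂ := B₂)
      (fun a b => gbsmDelta M₁ M₂ γ (fun _ _ => 0) s a s' b) (fun _ _ => 0) Rbar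
      (fun a b => by
        simp only [hδ0, zero_add]
        have := hR₁ s a
        have := hR₂ s' b
        exact abs_le.2 ⟨by linarith, by linarith⟩)
    simpa [gbsmF] using this
  have hmono : ∀ n i j, D n i j ≤ D (n+1) i j := by
    intro n
    induction n with
    | zero => intro i j; rw [hsucc]; exact hF0 i j
    | succ n ih =>
      intro i j
      rw [hsucc n, hsucc (n+1)]
      simpa using gbsmF_le_add M₁ M₂ γ hγ0 (D n) (D (n+1)) 0 (by simpa using ih) i j
  have h1γ : 0 < 1 - γ := by linarith
  have hC : Rbar + γ * (Rbar / (1 - γ)) = Rbar / (1 - γ) := by field_simp; ring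
  have hbd : ∀ n i j, D n i j ≤ Rbar / (1 - γ) := by
    intro n
    induction n with
    | zero => intro i j; exact (div_pos hRbar h1γ).le
    | succ n ih =>
      intro i j
      rw [hsucc n]
      have := gbsmF_le_add M₁ M₂ γ hγ0 (D n) (fun _ _ => 0) (Rbar / (1 - γ)) (by simpa using ih) i j
      have := hF1 i j
      linarith
  have hbdd : ∀ i j, BddAbove (Set.range fun n => D n i j) := fun i j =>
    ⟨_, by rintro _ ⟨n, rfl⟩; exact hbd n i j⟩
  have htend : ∀ i j, Filter.Tendsto (fun n => D n i j) Filter.atTop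
      (nhds (gbsm M₁ M₂ γ i j)) := fun i j =>
    tendsto_atTop_ciSup (monotone_nat_of_le_succ fun n => hmono n i j) (hbdd i j)
  refine le_of_forall_pos_le_add fun ε hε => ?_
  have hev : ∀ᶠ n in Filter.atTop, ∀ i j, gbsm M₁ M₂ γ i j ≤ D n i j + ε := by
    rw [Filter.eventually_all]; intro i
    rw [Filter.eventually_all]; intro j
    filter_upwards [(htend i j).eventually (lt_mem_nhds (sub_lt_self _ hε))] with n hn
    linarith
  obtain ⟨n, hn⟩ := hev.exists
  have h1 := gbsmF_le_add M₁ M₂ γ hγ0 _ (D n) ε hn s s'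
  rw [← hsucc] at h1
  have h2 : D (n+1) s s' ≤ gbsm M₁ M₂ γ s s' := le_ciSup (hbdd s s') (n+1)
  nlinarith

/-- optimal value difference is bounded by any prefixed point -/
lemma vstar_le [Nonempty T₁] [Nonempty T₂] (hγ0 : 0 ≤ γ) (hγ1 : γ < 1) (d : T₁ → T₂ → ℝ)
    (hd : ∀ s s', gbsmF M₁ M₂ γ d s s' ≤ d s s')
    (V₁ : T₁ → ℝ) (V₂ : T₂ → ℝ)
    (h₁ : ∀ s, V₁ s = ⨆ a, (M₁.R s a + γ * ∑ t, M₁.P s a t * V₁ t))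
    (h₂ : ∀ s', V₂ s' = ⨆ a, (M₂.R s' a + γ * ∑ t, M₂.P s' a t * V₂ t)) (s : T₁) (s' : T₂) :
    |V₁ s - V₂ s'| ≤ d s s' := by
  obtain ⟨p, hp⟩ := Finite.exists_max (fun p : T₁ × T₂ => |V₁ p.1 - V₂ p.2| - d p.1 p.2)
  set E := |V₁ p.1 - V₂ p.2| - d p.1 p.2 with hE
  have hE' : ∀ i j, |V₁ i - V₂ j| ≤ d i j + E := fun i j => by
    have := hp (i, j)
    simp only at this
    linarith
  have hq : ∀ s a s' b, |(M₁.R s a + γ * ∑ t, M₁.P s a t * V₁ t) -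
      (M₂.R s' b + γ * ∑ t, M₂.P s' b t * V₂ t)| ≤ gbsmDelta M₁ M₂ γ d s a s' b + γ * E := by
    intro s a s' b
    have h := W1_dual _ _ (M₁.P_nonneg s a) (M₂.P_nonneg s' b) (M₁.P_sum s a) (M₂.P_sum s' b)
      d E V₁ V₂ hE'
    have h3 := mul_le_mul_of_nonneg_left h hγ0
    rw [← abs_of_nonneg hγ0, ← abs_mul, abs_of_nonneg hγ0] at h3
    unfold gbsmDelta
    have h4 := abs_add_le (M₁.R s a - M₂.R s' b)
      (γ * (∑ i, M₁.P s a i * V₁ i - ∑ j, M₂.P s' b j * V₂ j))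
    have h5 : (M₁.R s a + γ * ∑ t, M₁.P s a t * V₁ t) -
      (M₂.R s' b + γ * ∑ t, M₂.P s' b t * V₂ t) = (M₁.R s a - M₂.R s' b) +
      (γ * (∑ i, M₁.P s a i * V₁ i - ∑ j, M₂.P s' b j * V₂ j)) := by ring
    rw [h5]
    linarith
  have key : ∀ s s', |V₁ s - V₂ s'| ≤ d s s' + γ * E := by
    intro s s'
    have hd' := hd s s'
    unfold gbsmF at hd'
    have hdl := (le_max_left _ _).trans hd'
    have hdr := (le_max_right _ _).trans hd'
    rw [abs_le']
    constructor
    · obtain ⟨a, ha⟩ := exists_eq_ciSup_of_finite (f := fun a => (M₁.R s a + γ * ∑ t, M₁.P s a t * V₁ t))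
      rw [← h₁] at ha
      obtain ⟨b, hb⟩ := exists_eq_ciInf_of_finite (f := fun b => gbsmDelta M₁ M₂ γ d s a s' b)
      have e1 := le_ciSup (f := fun a => ⨅ b, gbsmDelta M₁ M₂ γ d s a s' b)
        (Set.finite_range _).bddAbove a
      have e2 := le_ciSup (f := fun b => (M₂.R s' b + γ * ∑ t, M₂.P s' b t * V₂ t))
        (Set.finite_range _).bddAbove b
      rw [← h₂] at e2
      have e3 := (le_abs_self _).trans (hq s a s' b)
      linarith
    · obtain ⟨b, hb⟩ := exists_eq_ciSup_of_finite (f := fun b => (M₂.R s' b + γ * ∑ t, M₂.P s' b t * V₂ t))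
      rw [← h₂] at hb
      obtain ⟨a, ha⟩ := exists_eq_ciInf_of_finite (f := fun a => ⨆ b, gbsmDelta M₁ M₂ γ d s a s' b)
      have e1 := le_ciSup (f := fun b => gbsmDelta M₁ M₂ γ d s a s' b)
        (Set.finite_range _).bddAbove b
      have e2 := le_ciSup (f := fun a => (M₁.R s a + γ * ∑ t, M₁.P s a t * V₁ t))
        (Set.finite_range _).bddAbove a
      rw [← h₁] at e2
      have e3 := (neg_le_abs _).trans (hq s a s' b)
      linarith
  have hk := key p.1 p.2
  have hE0 : E ≤ 0 := by
    by_contra hcon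
    push Not at hcon
    nlinarith
  linarith [hE' s s']

end helpers

lemma avg_abs_le {T : Type*} [Fintype T] (P u v : T → ℝ) (hP : ∀ i, 0 ≤ P i)
    (hP1 : ∑ i, P i = 1) (C : ℝ) (h : ∀ i, |u i - v i| ≤ C) :
    |∑ i, P i * u i - ∑ i, P i * v i| ≤ C := by
  rw [← Finset.sum_sub_distrib]
  refine (Finset.abs_sum_le_sum_abs _ _).trans ?_
  calc _ ≤ ∑ i, P i * C := by
        refine Finset.sum_le_sum fun i _ => ?_
        rw [← mul_sub, abs_mul, abs_of_nonneg (hP i)]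
        exact mul_le_mul_of_nonneg_left (h i) (hP i)
    _ = C := by rw [← Finset.sum_mul, hP1, one_mul]

variable [Nonempty S₁] [Nonempty A₁] [Nonempty S₂] [Nonempty A₂]

/-- regret bound for policy transfer with a greedy action mapping. -/
theorem policy_transfer_regret_bound_greedy_action
    (M₁ : FinMDP S₁ A₁) (M₂ : FinMDP S₂ A₂) (γ Rbar : ℝ)
    (hγ0 : 0 ≤ γ) (hγ1 : γ < 1) (hRbar : 0 < Rbar)
    (hR₁ : ∀ s a, 0 ≤ M₁.R s a ∧ M₁.R s a ≤ Rbar)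
    (hR₂ : ∀ s a, 0 ≤ M₂.R s a ∧ M₂.R s a ≤ Rbar)
    (π : S₁ → A₁) (f : S₂ → S₁) (g : A₁ → A₂)
    (V₁star V₁pi : S₁ → ℝ) (V₂star V₂pi : S₂ → ℝ)
    (hV₁star : ∀ s, V₁star s = ⨆ a : A₁, (M₁.R s a + γ * ∑ t, M₁.P s a t * V₁star t))
    (hV₂star : ∀ s', V₂star s' = ⨆ a : A₂, (M₂.R s' a + γ * ∑ t, M₂.P s' a t * V₂star t))
    (hV₁pi : ∀ s, V₁pi s = M₁.R s (π s) + γ * ∑ t, M₁.P s (π s) t * V₁pi t)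
    (hV₂pi : ∀ s', V₂pi s' =
      M₂.R s' (g (π (f s'))) + γ * ∑ t, M₂.P s' (g (π (f s'))) t * V₂pi t)
    (hg : ∀ (s' : S₂) (a : A₁),
      gbsmDelta M₁ M₂ γ (gbsm M₁ M₂ γ) (f s') a s' (g a) =
        ⨅ a' : A₂, gbsmDelta M₁ M₂ γ (gbsm M₁ M₂ γ) (f s') a s' a') :
    (⨆ s' : S₂, |V₂star s' - V₂pi s'|) ≤
      2 / (1 - γ) * (⨆ s' : S₂, gbsm M₁ M₂ γ (f s') s') +
        (1 + γ) / (1 - γ) * ⨆ s : S₁, |V₁star s - V₁pi s| := by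
  have hfix := gbsm_prefixed M₁ M₂ γ Rbar hγ0 hγ1 hR₁ hR₂ hRbar
  have hstar := vstar_le M₁ M₂ γ hγ0 hγ1 _ hfix V₁star V₂star hV₁star hV₂star
  set d := gbsm M₁ M₂ γ with hd
  set D := ⨆ s' : S₂, d (f s') s' with hD
  set e := ⨆ s : S₁, |V₁star s - V₁pi s| with he
  set X := ⨆ s' : S₂, |V₂star s' - V₂pi s'| with hX
  have hDle : ∀ s', d (f s') s' ≤ D := fun s' =>
    le_ciSup (f := fun s' => d (f s') s') (Set.finite_range _).bddAbove s'
  have hele : ∀ s, |V₁star s - V₁pi s| ≤ e := fun s =>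
    le_ciSup (f := fun s => |V₁star s - V₁pi s|) (Set.finite_range _).bddAbove s
  have hXle : ∀ s', |V₂star s' - V₂pi s'| ≤ X := fun s' =>
    le_ciSup (f := fun s' => |V₂star s' - V₂pi s'|) (Set.finite_range _).bddAbove s'
  have hmain : X ≤ 2 * D + (1 + γ) * e + γ * X := by
    refine ciSup_le fun s' => ?_
    have hδ : gbsmDelta M₁ M₂ γ d (f s') (π (f s')) s' (g (π (f s'))) ≤ D := by
      rw [hg]
      refine le_trans ?_ (hDle s')
      refine le_trans ?_ (hfix (f s') s')
      unfold gbsmF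
      exact (le_ciSup (f := fun a => ⨅ b, gbsmDelta M₁ M₂ γ d (f s') a s' b)
        (Set.finite_range _).bddAbove (π (f s'))).trans (le_max_left _ _)
    unfold gbsmDelta at hδ
    have p1 := hV₁pi (f s')
    have p2 := hV₂pi s'
    set a := π (f s')
    set b := g a
    have a1 := abs_le.1 (avg_abs_le (M₁.P (f s') a) V₁star V₁pi (M₁.P_nonneg _ _) (M₁.P_sum _ _) e hele)
    have a2 := abs_le.1 (avg_abs_le (M₂.P s' b) V₂star V₂pi (M₂.P_nonneg _ _) (M₂.P_sum _ _) X hXle)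
    have a3 := abs_le.1 (W1_dual _ _ (M₁.P_nonneg (f s') a) (M₂.P_nonneg s' b) (M₁.P_sum (f s') a)
      (M₂.P_sum s' b) d 0 V₁star V₂star (by simpa using hstar))
    have b1 := abs_le.1 ((hstar (f s') s').trans (hDle s'))
    have b2 := abs_le.1 (hele (f s'))
    have b3 := le_abs_self (M₁.R (f s') a - M₂.R s' b)
    have b4 := neg_le_abs (M₁.R (f s') a - M₂.R s' b)
    set w := W1 (M₁.P (f s') a) (M₂.P s' b) d
    set x1 := ∑ t, M₁.P (f s') a t * V₁pi t
    set x2 := ∑ t, M₂.P s' b t * V₂pi t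
    have c1 : γ * (x1 - x2) ≤ γ * (e + w + X) := mul_le_mul_of_nonneg_left (by linarith) hγ0
    have c2 : γ * (x2 - x1) ≤ γ * (e + w + X) := mul_le_mul_of_nonneg_left (by linarith) hγ0
    rw [abs_le']
    constructor <;> linarith
  have h1 : 0 < 1 - γ := by linarith
  have : 2 / (1 - γ) * D + (1 + γ) / (1 - γ) * e = (2 * D + (1 + γ) * e) / (1 - γ) := by ring
  rw [this, le_div_iff₀ h1]
  linarith

end
end

section
/- Let M₁, M₂ be finite MDPs with the same discount factor γ ∈ [0,1), and let M_{1̂} = ⟨S₁, A₁, P̂₁, R₁, γ⟩ and M_{2̂} = ⟨S₂, A₂, P̂₂, R₂, γ⟩ be MDPs that differ from M₁, M₂ only in their transition probabilities. Then the pairwise GBSMs satisfy, for all s ∈ S₁ and s' ∈ S₂: |d^{1-2}(s,s') − d^{1̂-2̂}(s,s')| ≤ max_{s∈S₁} d^{1-1̂}(s,s) + max_{s'∈S₂} d^{2-2̂}(s',s'). -/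
open scoped BigOperators

noncomputable section

variable {S₁ A₁ S₂ A₂ : Type*} [Fintype S₁] [Fintype A₁] [Fintype S₂] [Fintype A₂]

section Helpers

def IsCoup {X Y : Type*} [Fintype X] [Fintype Y] (P : X → ℝ) (Q : Y → ℝ)
    (lam : X → Y → ℝ) : Prop :=
  (∀ i j, 0 ≤ lam i j) ∧ (∀ i, ∑ j, lam i j = P i) ∧ (∀ j, ∑ i, lam i j = Q j)

def IsProb {X : Type*} [Fintype X] (P : X → ℝ) : Prop := (∀ i, 0 ≤ P i) ∧ ∑ i, P i = 1

lemma isCoup_prod {X Y : Type*} [Fintype X] [Fintype Y] {P : X → ℝ} {Q : Y → ℝ}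
    (hP : IsProb P) (hQ : IsProb Q) : IsCoup P Q (fun i j => P i * Q j) := by
  refine ⟨fun i j => mul_nonneg (hP.1 i) (hQ.1 j), fun i => ?_, fun j => ?_⟩
  · rw [← Finset.mul_sum, hQ.2, mul_one]
  · rw [← Finset.sum_mul, hP.2, one_mul]

lemma W1_le {X Y : Type*} [Fintype X] [Fintype Y] {P : X → ℝ} {Q : Y → ℝ}
    {d : X → Y → ℝ} (hd : ∀ i j, 0 ≤ d i j) {lam : X → Y → ℝ} (h : IsCoup P Q lam) :
    W1 P Q d ≤ ∑ i, ∑ j, lam i j * d i j := by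
  apply csInf_le
  · refine ⟨0, ?_⟩
    rintro c ⟨l, h0, -, -, rfl⟩
    exact Finset.sum_nonneg fun i _ => Finset.sum_nonneg fun j _ => mul_nonneg (h0 i j) (hd i j)
  · exact ⟨lam, h.1, h.2.1, h.2.2, rfl⟩

lemma le_W1 {X Y : Type*} [Fintype X] [Fintype Y] {P : X → ℝ} {Q : Y → ℝ}
    (hP : IsProb P) (hQ : IsProb Q) {d : X → Y → ℝ} {c : ℝ}
    (h : ∀ lam, IsCoup P Q lam → c ≤ ∑ i, ∑ j, lam i j * d i j) : c ≤ W1 P Q d := by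
  apply le_csInf
  · have := isCoup_prod hP hQ
    exact ⟨_, _, this.1, this.2.1, this.2.2, rfl⟩
  · rintro c' ⟨l, h0, h1, h2, rfl⟩
    exact h l ⟨h0, h1, h2⟩

lemma W1_nonneg {X Y : Type*} [Fintype X] [Fintype Y] {P : X → ℝ} {Q : Y → ℝ}
    (hP : IsProb P) (hQ : IsProb Q) {d : X → Y → ℝ} (hd : ∀ i j, 0 ≤ d i j) :
    0 ≤ W1 P Q d :=
  le_W1 hP hQ fun _ hl => Finset.sum_nonneg fun i _ => Finset.sum_nonneg fun j _ =>
    mul_nonneg (hl.1 i j) (hd i j)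

lemma W1_le_const {X Y : Type*} [Fintype X] [Fintype Y] {P : X → ℝ} {Q : Y → ℝ}
    (hP : IsProb P) (hQ : IsProb Q) {d : X → Y → ℝ} (hd : ∀ i j, 0 ≤ d i j) {C : ℝ}
    (hC : ∀ i j, d i j ≤ C) : W1 P Q d ≤ C := by
  have hc := isCoup_prod hP hQ
  refine (W1_le hd hc).trans ?_
  calc ∑ i, ∑ j, P i * Q j * d i j ≤ ∑ i, ∑ j, P i * Q j * C :=
        Finset.sum_le_sum fun i _ => Finset.sum_le_sum fun j _ =>
          mul_le_mul_of_nonneg_left (hC i j) (hc.1 i j)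
    _ = C := by
        simp_rw [← Finset.sum_mul, hc.2.1, hP.2, one_mul]

lemma W1_symm_le {X Y : Type*} [Fintype X] [Fintype Y] {P : X → ℝ} {Q : Y → ℝ}
    (hP : IsProb P) (hQ : IsProb Q) {d : X → Y → ℝ} (hd : ∀ i j, 0 ≤ d i j) :
    W1 Q P (fun j i => d i j) ≤ W1 P Q d := by
  refine le_W1 hP hQ fun l hl => ?_
  refine (W1_le (fun j i => hd i j) (lam := fun j i => l i j)
    ⟨fun j i => hl.1 i j, hl.2.2, hl.2.1⟩).trans_eq ?_
  exact Finset.sum_comm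

lemma W1_tri {X Y Z : Type*} [Fintype X] [Fintype Y] [Fintype Z]
    {P : X → ℝ} {Q : Y → ℝ} {R : Z → ℝ}
    (hP : IsProb P) (hQ : IsProb Q) (hR : IsProb R)
    {f : X → Z → ℝ} {g : X → Y → ℝ} {h : Y → Z → ℝ} (hf : ∀ x z, 0 ≤ f x z)
    (H : ∀ x y z, f x z ≤ g x y + h y z) :
    W1 P R f ≤ W1 P Q g + W1 Q R h := by
  have key : ∀ l m, IsCoup P Q l → IsCoup Q R m →
      W1 P R f ≤ ∑ x, ∑ y, l x y * g x y + ∑ y, ∑ z, m y z * h y z := by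
    intro l m hl hm
    have l0 : ∀ x y, l x y * (Q y / Q y) = l x y := by
      intro x y
      by_cases hq : Q y = 0
      · have := (Finset.sum_eq_zero_iff_of_nonneg (fun i _ => hl.1 i y)).1
          ((hl.2.2 y).trans hq) x (Finset.mem_univ _)
        simp [this]
      · rw [div_self hq, mul_one]
    have m0 : ∀ y z, (Q y / Q y) * m y z = m y z := by
      intro y z
      by_cases hq : Q y = 0
      · have := (Finset.sum_eq_zero_iff_of_nonneg (fun i _ => hm.1 y i)).1
          ((hm.2.1 y).trans hq) z (Finset.mem_univ _)
        simp [this]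
      · rw [div_self hq, one_mul]
    have tl : ∀ x y, ∑ z, l x y * m y z / Q y = l x y := by
      intro x y
      rw [← Finset.sum_div, ← Finset.mul_sum, hm.2.1, mul_div_assoc, l0]
    have tm : ∀ y z, ∑ x, l x y * m y z / Q y = m y z := by
      intro y z
      rw [← Finset.sum_div, ← Finset.sum_mul, hl.2.2, mul_div_right_comm, m0]
    have t0 : ∀ x y z, 0 ≤ l x y * m y z / Q y := fun x y z =>
      div_nonneg (mul_nonneg (hl.1 x y) (hm.1 y z)) (hQ.1 y)
    have hc : IsCoup P R (fun x z => ∑ y, l x y * m y z / Q y) := by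
      refine ⟨fun x z => Finset.sum_nonneg fun y _ => t0 x y z, fun x => ?_, fun z => ?_⟩
      · rw [Finset.sum_comm]
        simp_rw [tl, hl.2.1]
      · rw [Finset.sum_comm]
        simp_rw [tm, hm.2.2]
    refine (W1_le hf hc).trans ?_
    calc ∑ x, ∑ z, (∑ y, l x y * m y z / Q y) * f x z
        = ∑ x, ∑ z, ∑ y, l x y * m y z / Q y * f x z := by simp_rw [Finset.sum_mul]
      _ ≤ ∑ x, ∑ z, ∑ y, (l x y * m y z / Q y * g x y + l x y * m y z / Q y * h y z) := by
          refine Finset.sum_le_sum fun x _ => Finset.sum_le_sum fun z _ =>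
            Finset.sum_le_sum fun y _ => ?_
          rw [← mul_add]
          exact mul_le_mul_of_nonneg_left (H x y z) (t0 x y z)
      _ = (∑ x, ∑ z, ∑ y, l x y * m y z / Q y * g x y)
          + ∑ x, ∑ z, ∑ y, l x y * m y z / Q y * h y z := by
          simp_rw [Finset.sum_add_distrib]
      _ = _ := by
          congr 1
          · refine Finset.sum_congr rfl fun x _ => ?_
            rw [Finset.sum_comm]
            refine Finset.sum_congr rfl fun y _ => ?_
            rw [← Finset.sum_mul, tl]
          · rw [Finset.sum_comm]
            have : ∀ z, ∑ x, ∑ y, l x y * m y z / Q y * h y z = ∑ y, m y z * h y z := by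
              intro z
              rw [Finset.sum_comm]
              refine Finset.sum_congr rfl fun y _ => ?_
              rw [← Finset.sum_mul, tm]
            simp_rw [this]
            exact Finset.sum_comm
  have h1 : W1 P R f - W1 Q R h ≤ W1 P Q g := by
    refine le_W1 hP hQ fun l hl => ?_
    have : W1 P R f - ∑ x, ∑ y, l x y * g x y ≤ W1 Q R h :=
      le_W1 hQ hR fun m hm => by linarith [key l m hl hm]
    linarith
  linarith

lemma W1_tri3 {X Y Z T : Type*} [Fintype X] [Fintype Y] [Fintype Z] [Fintype T]
    [Nonempty Z]
    {P : X → ℝ} {Q : Y → ℝ} {R : Z → ℝ} {U : T → ℝ}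
    (hP : IsProb P) (hQ : IsProb Q) (hR : IsProb R) (hU : IsProb U)
    {f : X → T → ℝ} {g : X → Y → ℝ} {h : Y → Z → ℝ} {k : Z → T → ℝ}
    (hf : ∀ x z, 0 ≤ f x z) (hh : ∀ x z, 0 ≤ h x z) (hk : ∀ x z, 0 ≤ k x z)
    (H : ∀ x y z t, f x t ≤ g x y + h y z + k z t) :
    W1 P U f ≤ W1 P Q g + W1 Q R h + W1 R U k := by
  have h1 : W1 P U f ≤ W1 P Q g + W1 Q U (fun y t => ⨅ z, (h y z + k z t)) := by
    refine W1_tri hP hQ hU hf fun x y t => ?_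
    have : f x t - g x y ≤ ⨅ z, (h y z + k z t) := le_ciInf fun z => by linarith [H x y z t]
    linarith
  have h2 : W1 Q U (fun y t => ⨅ z, (h y z + k z t)) ≤ W1 Q R h + W1 R U k :=
    W1_tri hQ hR hU (fun y t => Real.iInf_nonneg fun z => add_nonneg (hh _ _) (hk _ _))
      fun y z t => ciInf_le (Set.finite_range _).bddBelow z
  linarith

def HH {A B : Type*} (c : A → B → ℝ) : ℝ :=
  max (⨆ a, ⨅ b, c a b) (⨅ a, ⨆ b, c a b)

lemma HH_le {A B : Type*} [Finite A] [Finite B] [Nonempty A] [Nonempty B]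
    {c : A → B → ℝ} {e : ℝ} (h1 : ∀ a, ∃ b, c a b ≤ e) (h2 : ∃ a, ∀ b, c a b ≤ e) :
    HH c ≤ e := by
  refine max_le (ciSup_le fun a => ?_) ?_
  · obtain ⟨b, hb⟩ := h1 a
    exact (ciInf_le (Set.finite_range _).bddBelow b).trans hb
  · obtain ⟨a, ha⟩ := h2
    exact (ciInf_le (Set.finite_range _).bddBelow a).trans (ciSup_le ha)

lemma HH_one {A B : Type*} [Finite A] [Finite B] [Nonempty A] [Nonempty B]
    (c : A → B → ℝ) (a : A) : ∃ b, c a b ≤ HH c := by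
  obtain ⟨b, hb⟩ := exists_eq_ciInf_of_finite (f := c a)
  refine ⟨b, hb.trans_le (le_trans ?_ (le_max_left _ _))⟩
  exact le_ciSup (f := fun a => ⨅ b, c a b) (Set.finite_range _).bddAbove a

lemma HH_two {A B : Type*} [Finite A] [Finite B] [Nonempty A] [Nonempty B]
    (c : A → B → ℝ) : ∃ a, ∀ b, c a b ≤ HH c := by
  obtain ⟨a, ha⟩ := exists_eq_ciInf_of_finite (f := fun a => ⨆ b, c a b)
  refine ⟨a, fun b => ?_⟩
  exact (le_ciSup (Set.finite_range (c a)).bddAbove b).trans (ha.trans_le (le_max_right _ _))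

lemma HH_tri {A B C D : Type*} [Finite A] [Finite B] [Nonempty A] [Nonempty B]
    [Finite C] [Finite D] [Nonempty C] [Nonempty D]
    {f : A → D → ℝ} {g : A → B → ℝ} {h : B → C → ℝ} {k : C → D → ℝ} {e1 e2 : ℝ}
    (hg1 : ∀ a, ∃ b, g a b ≤ e1) (hg2 : ∀ b, ∃ a, g a b ≤ e1)
    (hk1 : ∀ a, ∃ b, k a b ≤ e2) (hk2 : ∀ b, ∃ a, k a b ≤ e2)
    (H : ∀ a b c d, f a d ≤ g a b + h b c + k c d) : HH f ≤ e1 + HH h + e2 := by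
  apply HH_le
  · intro a
    obtain ⟨b, hb⟩ := hg1 a
    obtain ⟨c, hc⟩ := HH_one h b
    obtain ⟨d, hd⟩ := hk1 c
    exact ⟨d, by linarith [H a b c d]⟩
  · obtain ⟨b, hb⟩ := HH_two h
    obtain ⟨a, ha⟩ := hg2 b
    refine ⟨a, fun d => ?_⟩
    obtain ⟨c, hc⟩ := hk2 d
    linarith [H a b c d, hb c]

def itr {S A T B : Type*} [Fintype S] [Fintype A] [Fintype T] [Fintype B]
    (M : FinMDP S A) (N : FinMDP T B) (γ : ℝ) (n : ℕ) : S → T → ℝ :=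
  (gbsmF M N γ)^[n] (fun _ _ => 0)

lemma itr_succ {S A T B : Type*} [Fintype S] [Fintype A] [Fintype T] [Fintype B]
    (M : FinMDP S A) (N : FinMDP T B) (γ : ℝ) (n : ℕ) (s : S) (t : T) :
    itr M N γ (n + 1) s t = HH (fun a b => gbsmDelta M N γ (itr M N γ n) s a t b) := by
  simp only [itr, Function.iterate_succ_apply']
  rfl

lemma FinMDP.prob {S A : Type*} [Fintype S] [Fintype A] (M : FinMDP S A) (s : S) (a : A) :
    IsProb (M.P s a) := ⟨M.P_nonneg s a, M.P_sum s a⟩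

lemma itr_nonneg {S A T B : Type*} [Fintype S] [Fintype A] [Fintype T] [Fintype B]
    [Nonempty A] [Nonempty B]
    (M : FinMDP S A) (N : FinMDP T B) {γ : ℝ} (hγ : 0 ≤ γ) (n : ℕ) :
    ∀ (s : S) (t : T), 0 ≤ itr M N γ n s t := by
  induction n with
  | zero => intro s t; exact le_rfl
  | succ n ih =>
    intro s t
    rw [itr_succ]
    obtain ⟨a, ha⟩ := HH_two (fun a b => gbsmDelta M N γ (itr M N γ n) s a t b)
    obtain ⟨b⟩ := ‹Nonempty B›
    refine le_trans ?_ (ha b)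
    exact add_nonneg (abs_nonneg _) (mul_nonneg hγ (W1_nonneg (M.prob _ _) (N.prob _ _) ih))

lemma itr_le {S A T B : Type*} [Fintype S] [Fintype A] [Fintype T] [Fintype B]
    [Nonempty A] [Nonempty B]
    (M : FinMDP S A) (N : FinMDP T B) {γ r : ℝ} (hγ : 0 ≤ γ) (hγ1 : γ < 1) (hr : 0 < r)
    (hM : ∀ s a, 0 ≤ M.R s a ∧ M.R s a ≤ r) (hN : ∀ s a, 0 ≤ N.R s a ∧ N.R s a ≤ r) (n : ℕ) :
    ∀ (s : S) (t : T), itr M N γ n s t ≤ r / (1 - γ) := by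
  have h1 : 0 < 1 - γ := by linarith
  induction n with
  | zero => intro s t; exact div_nonneg hr.le h1.le
  | succ n ih =>
    intro s t
    rw [itr_succ]
    have key : ∀ a b, gbsmDelta M N γ (itr M N γ n) s a t b ≤ r / (1 - γ) := by
      intro a b
      have e : r / (1 - γ) = r + γ * (r / (1 - γ)) := by field_simp; ring
      rw [e]
      refine add_le_add ?_ (mul_le_mul_of_nonneg_left
        (W1_le_const (M.prob _ _) (N.prob _ _) (itr_nonneg M N hγ n) ih) hγ)
      have := hM s a
      have := hN t b
      rw [abs_le]; constructor <;> linarith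
    inhabit A
    inhabit B
    exact HH_le (fun a => ⟨default, key _ _⟩) ⟨default, fun b => key _ _⟩

lemma itr_le_gbsm {S A T B : Type*} [Fintype S] [Fintype A] [Fintype T] [Fintype B]
    [Nonempty A] [Nonempty B]
    (M : FinMDP S A) (N : FinMDP T B) {γ r : ℝ} (hγ : 0 ≤ γ) (hγ1 : γ < 1) (hr : 0 < r)
    (hM : ∀ s a, 0 ≤ M.R s a ∧ M.R s a ≤ r) (hN : ∀ s a, 0 ≤ N.R s a ∧ N.R s a ≤ r) (n : ℕ)
    (s : S) (t : T) : itr M N γ n s t ≤ gbsm M N γ s t := by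
  refine le_ciSup (f := fun n => itr M N γ n s t) ⟨r / (1 - γ), ?_⟩ n
  rintro _ ⟨n, rfl⟩
  exact itr_le M N hγ hγ1 hr hM hN n s t

lemma HH_cov {A B : Type*} [Finite A] [Finite B] [Nonempty A] [Nonempty B]
    (c : A → B → ℝ) (b : B) : ∃ a, c a b ≤ HH c :=
  let ⟨a, ha⟩ := HH_two c
  ⟨a, ha b⟩

/-- Forward triangle inequality (third metric reversed). -/
lemma itr_tri {S A S' A' T B T' B' : Type*} [Fintype S] [Fintype A] [Fintype T] [Fintype B]
    [Fintype S'] [Fintype A'] [Fintype T'] [Fintype B']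
    [Nonempty A] [Nonempty B] [Nonempty A'] [Nonempty B']
    (M : FinMDP S A) (M' : FinMDP S' A') (N : FinMDP T B) (N' : FinMDP T' B')
    {γ : ℝ} (hγ : 0 ≤ γ) (n : ℕ) :
    ∀ s s' t t', itr M N γ n s t ≤ itr M M' γ n s s' + itr M' N' γ n s' t' + itr N N' γ n t t' := by
  induction n with
  | zero => intro s s' t t'; simp [itr]
  | succ n ih =>
    intro s s' t t'
    simp only [itr_succ]
    haveI : Nonempty T' := ⟨t'⟩
    refine HH_tri (k := fun b' b => gbsmDelta N N' γ (itr N N' γ n) t b t' b')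
      (HH_one _) (HH_cov _) (HH_cov _) (HH_one _) fun a a' b' b => ?_
    have hW := W1_tri3 (M.prob s a) (M'.prob s' a') (N'.prob t' b') (N.prob t b)
      (f := itr M N γ n) (g := itr M M' γ n) (h := itr M' N' γ n)
      (k := fun y x => itr N N' γ n x y)
      (itr_nonneg M N hγ n) (itr_nonneg M' N' hγ n) (fun y x => itr_nonneg N N' hγ n x y)
      (fun x y z w => ih x y w z)
    have hs := W1_symm_le (N.prob t b) (N'.prob t' b') (itr_nonneg N N' hγ n)
    have hm := mul_le_mul_of_nonneg_left (hW.trans (add_le_add_right hs _)) hγ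
    have e1 := abs_sub_le (M.R s a) (M'.R s' a') (N.R t b)
    have e2 := abs_sub_le (M'.R s' a') (N'.R t' b') (N.R t b)
    rw [abs_sub_comm (N'.R t' b')] at e2
    simp only [gbsmDelta]
    linarith

/-- Triangle inequality in the other direction (first metric reversed). -/
lemma itr_tri' {S A S' A' T B T' B' : Type*} [Fintype S] [Fintype A] [Fintype T] [Fintype B]
    [Fintype S'] [Fintype A'] [Fintype T'] [Fintype B']
    [Nonempty A] [Nonempty B] [Nonempty A'] [Nonempty B']
    (M : FinMDP S A) (M' : FinMDP S' A') (N : FinMDP T B) (N' : FinMDP T' B')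
    {γ : ℝ} (hγ : 0 ≤ γ) (n : ℕ) :
    ∀ s s' t t', itr M' N' γ n s' t' ≤ itr M M' γ n s s' + itr M N γ n s t + itr N N' γ n t t' := by
  induction n with
  | zero => intro s s' t t'; simp [itr]
  | succ n ih =>
    intro s s' t t'
    simp only [itr_succ]
    haveI : Nonempty T := ⟨t⟩
    refine HH_tri (g := fun a' a => gbsmDelta M M' γ (itr M M' γ n) s a s' a')
      (HH_cov _) (HH_one _) (HH_one _) (HH_cov _) fun a' a b b' => ?_
    have hW := W1_tri3 (M'.prob s' a') (M.prob s a) (N.prob t b) (N'.prob t' b')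
      (f := itr M' N' γ n) (g := fun y x => itr M M' γ n x y) (h := itr M N γ n)
      (k := itr N N' γ n)
      (itr_nonneg M' N' hγ n) (itr_nonneg M N hγ n) (itr_nonneg N N' hγ n)
      (fun x y z w => ih y x z w)
    have hs := W1_symm_le (M.prob s a) (M'.prob s' a') (itr_nonneg M M' hγ n)
    have hm := mul_le_mul_of_nonneg_left hW hγ
    have hm2 := mul_le_mul_of_nonneg_left hs hγ
    have e1 := abs_sub_le (M'.R s' a') (M.R s a) (N'.R t' b')
    have e2 := abs_sub_le (M.R s a) (N.R t b) (N'.R t' b')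
    rw [abs_sub_comm (M'.R s' a') (M.R s a)] at e1
    simp only [gbsmDelta]
    linarith

end Helpers

/-- state-similarity estimation error bound. `M₁hat`, `M₂hat` differ
from `M₁`, `M₂` only in their transition probabilities. -/
theorem ssa_estimation_error_bound
    [Nonempty S₁] [Nonempty A₁] [Nonempty S₂] [Nonempty A₂]
    (M₁ M₁hat : FinMDP S₁ A₁) (M₂ M₂hat : FinMDP S₂ A₂) (γ Rbar : ℝ)
    (hγ0 : 0 ≤ γ) (hγ1 : γ < 1) (hRbar : 0 < Rbar)
    (hR₁ : ∀ s a, 0 ≤ M₁.R s a ∧ M₁.R s a ≤ Rbar)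
    (hR₂ : ∀ s a, 0 ≤ M₂.R s a ∧ M₂.R s a ≤ Rbar)
    (hRhat₁ : M₁hat.R = M₁.R) (hRhat₂ : M₂hat.R = M₂.R) :
    ∀ (s : S₁) (s' : S₂),
      |gbsm M₁ M₂ γ s s' - gbsm M₁hat M₂hat γ s s'| ≤
        (⨆ s : S₁, gbsm M₁ M₁hat γ s s) + ⨆ s' : S₂, gbsm M₂ M₂hat γ s' s' := by
  intro s s'
  have hR₁' : ∀ s a, 0 ≤ M₁hat.R s a ∧ M₁hat.R s a ≤ Rbar := by rw [hRhat₁]; exact hR₁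
  have hR₂' : ∀ s a, 0 ≤ M₂hat.R s a ∧ M₂hat.R s a ≤ Rbar := by rw [hRhat₂]; exact hR₂
  have g1 := le_ciSup (f := fun s => gbsm M₁ M₁hat γ s s) (Set.finite_range _).bddAbove s
  have g2 := le_ciSup (f := fun s => gbsm M₂ M₂hat γ s s) (Set.finite_range _).bddAbove s'
  have b1 := fun n => itr_le_gbsm M₁ M₁hat hγ0 hγ1 hRbar hR₁ hR₁' n s s
  have b2 := fun n => itr_le_gbsm M₂ M₂hat hγ0 hγ1 hRbar hR₂ hR₂' n s' s'
  have u1 : gbsm M₁ M₂ γ s s' ≤ gbsm M₁hat M₂hat γ s s' +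
      ((⨆ s : S₁, gbsm M₁ M₁hat γ s s) + ⨆ s' : S₂, gbsm M₂ M₂hat γ s' s') := by
    refine ciSup_le fun n => ?_
    have h1 := itr_tri M₁ M₁hat M₂ M₂hat hγ0 n s s s' s'
    have h2 := itr_le_gbsm M₁hat M₂hat hγ0 hγ1 hRbar hR₁' hR₂' n s s'
    have h3 := b1 n
    have h4 := b2 n
    change itr M₁ M₂ γ n s s' ≤ _
    linarith
  have u2 : gbsm M₁hat M₂hat γ s s' ≤ gbsm M₁ M₂ γ s s' +
      ((⨆ s : S₁, gbsm M₁ M₁hat γ s s) + ⨆ s' : S₂, gbsm M₂ M₂hat γ s' s') := by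
    refine ciSup_le fun n => ?_
    have h1 := itr_tri' M₁ M₁hat M₂ M₂hat hγ0 n s s s' s'
    have h2 := itr_le_gbsm M₁ M₂ hγ0 hγ1 hRbar hR₁ hR₂ n s s'
    have h3 := b1 n
    have h4 := b2 n
    change itr M₁hat M₂hat γ n s s' ≤ _
    linarith
  rw [abs_le]
  constructor <;> linarith

end
end

section
/- Let M₁, M₂ be finite MDPs with the same discount factor γ ∈ [0,1) and rewards bounded by R̄, and let M_{1̂}, M_{2̂} differ from M₁, M₂ only in their transition probabilities. Then the pairwise GBSMs satisfy max_{s,s'} |d^{1-2}(s,s') − d^{1̂-2̂}(s,s')| ≤ (γ·R̄/(2·(1−γ)²)) · ( max_{s∈S₁, a∈A₁} Σ_{s̃∈S₁} |P₁(s̃|s,a) − P̂₁(s̃|s,a)| + max_{s'∈S₂, a∈A₂} Σ_{s̃∈S₂} |P₂(s̃|s',a) − P̂₂(s̃|s',a)| ). -/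
open scoped BigOperators

noncomputable section

variable {S₁ A₁ S₂ A₂ : Type*} [Fintype S₁] [Fintype A₁] [Fintype S₂] [Fintype A₂]

theorem aux_coupling {S₁ S₂ : Type*} [Fintype S₁] [Fintype S₂]
    (P P' : S₁ → ℝ) (Q : S₂ → ℝ) (d : S₁ → S₂ → ℝ) (C : ℝ)
    (hP0 : ∀ i, 0 ≤ P i) (hP0' : ∀ i, 0 ≤ P' i) (hP : ∑ i, P i = 1) (hP' : ∑ i, P' i = 1)
    (hd0 : ∀ i j, 0 ≤ d i j) (hdC : ∀ i j, d i j ≤ C)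
    (lam : S₁ → S₂ → ℝ) (h0 : ∀ i j, 0 ≤ lam i j) (h1 : ∀ i, ∑ j, lam i j = P' i)
    (h2 : ∀ j, ∑ i, lam i j = Q j) :
    ∃ lam' : S₁ → S₂ → ℝ, (∀ i j, 0 ≤ lam' i j) ∧ (∀ i, ∑ j, lam' i j = P i) ∧
      (∀ j, ∑ i, lam' i j = Q j) ∧
      ∑ i, ∑ j, lam' i j * d i j ≤ ∑ i, ∑ j, lam i j * d i j + C / 2 * ∑ i, |P i - P' i| := by
  set r : S₁ → ℝ := fun i => min (P i) (P' i) / P' i with hr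
  set p : S₁ → ℝ := fun i => P i - min (P i) (P' i) with hp
  set μ : S₂ → ℝ := fun j => ∑ i, lam i j * (1 - r i) with hμ
  set T : ℝ := ∑ i, p i with hT
  have hr0 : ∀ i, 0 ≤ r i := fun i => div_nonneg (le_min (hP0 i) (hP0' i)) (hP0' i)
  have hr1 : ∀ i, r i ≤ 1 := fun i => div_le_one_of_le₀ (min_le_right _ _) (hP0' i)
  have hPr : ∀ i, P' i * r i = min (P i) (P' i) := by
    intro i
    rcases eq_or_ne (P' i) 0 with h | h
    · simp [h, hP0 i]
    · simp only [hr]; field_simp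
  have hp0 : ∀ i, 0 ≤ p i := fun i => sub_nonneg.2 (min_le_left _ _)
  have hμ0 : ∀ j, 0 ≤ μ j := fun j =>
    Finset.sum_nonneg fun i _ => mul_nonneg (h0 i j) (sub_nonneg.2 (hr1 i))
  have hT0 : 0 ≤ T := Finset.sum_nonneg fun i _ => hp0 i
  have hTm : T = 1 - ∑ i, min (P i) (P' i) := by
    simp only [hT, hp, Finset.sum_sub_distrib, hP]
  have hμT : ∑ j, μ j = T := by
    simp only [hμ]
    rw [Finset.sum_comm]
    simp only [← Finset.sum_mul, h1, mul_sub, mul_one, hPr, Finset.sum_sub_distrib, hP', hTm]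
  have hTabs : T = (∑ i, |P i - P' i|) / 2 := by
    have : ∑ i, |P i - P' i| = ∑ i, (P i + P' i - 2 * min (P i) (P' i)) := by
      refine Finset.sum_congr rfl fun i _ => ?_
      rcases le_total (P i) (P' i) with h | h
      · rw [min_eq_left h, abs_of_nonpos (by linarith)]; ring
      · rw [min_eq_right h, abs_of_nonneg (by linarith)]; ring
    rw [this, Finset.sum_sub_distrib, Finset.sum_add_distrib, ← Finset.mul_sum, hP, hP', hTm]
    ring
  have hpT : ∀ i, p i * (T / T) = p i := by
    intro i
    rcases eq_or_ne T 0 with h | h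
    · have := (Finset.sum_eq_zero_iff_of_nonneg fun i _ => hp0 i).1 (hT ▸ h) i (Finset.mem_univ i)
      simp [this]
    · rw [div_self h, mul_one]
  have hμT' : ∀ j, T * (μ j / T) = μ j := by
    intro j
    rcases eq_or_ne T 0 with h | h
    · have := (Finset.sum_eq_zero_iff_of_nonneg fun i _ => hμ0 i).1 (hμT.trans h) j
        (Finset.mem_univ j)
      simp [this]
    · field_simp
  have hrow : ∀ i, ∑ j, p i * (μ j / T) = p i := by
    intro i
    rw [← Finset.mul_sum, ← Finset.sum_div, hμT, hpT]
  have hnn : ∀ i j, 0 ≤ p i * (μ j / T) := fun i j =>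
    mul_nonneg (hp0 i) (div_nonneg (hμ0 j) hT0)
  refine ⟨fun i j => lam i j * r i + p i * (μ j / T), ?_, ?_, ?_, ?_⟩
  · exact fun i j => add_nonneg (mul_nonneg (h0 i j) (hr0 i)) (hnn i j)
  · intro i
    rw [Finset.sum_add_distrib, hrow, ← Finset.sum_mul, h1, hPr]
    simp [hp]
  · intro j
    rw [Finset.sum_add_distrib, ← Finset.sum_mul, ← hT, hμT', ← h2, ← Finset.sum_add_distrib]
    exact Finset.sum_congr rfl fun i _ => by ring
  · have e : C / 2 * ∑ i, |P i - P' i| = ∑ i, ∑ j, p i * (μ j / T) * C := by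
      simp only [← Finset.sum_mul, hrow, ← hT]
      rw [hTabs]; ring
    rw [e, ← Finset.sum_add_distrib]
    refine Finset.sum_le_sum fun i _ => ?_
    rw [← Finset.sum_add_distrib]
    refine Finset.sum_le_sum fun j _ => ?_
    have a1 := mul_le_mul_of_nonneg_left (hdC i j) (hnn i j)
    have a2 := mul_le_mul_of_nonneg_right (mul_le_of_le_one_right (h0 i j) (hr1 i)) (hd0 i j)
    linarith [add_mul (lam i j * r i) (p i * (μ j / T)) (d i j)]

theorem aux_W1_le {S₁ S₂ : Type*} [Fintype S₁] [Fintype S₂]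
    (P : S₁ → ℝ) (Q : S₂ → ℝ) (d : S₁ → S₂ → ℝ) (hd0 : ∀ i j, 0 ≤ d i j)
    (lam : S₁ → S₂ → ℝ) (h0 : ∀ i j, 0 ≤ lam i j) (h1 : ∀ i, ∑ j, lam i j = P i)
    (h2 : ∀ j, ∑ i, lam i j = Q j) : W1 P Q d ≤ ∑ i, ∑ j, lam i j * d i j := by
  refine csInf_le ⟨0, ?_⟩ ⟨lam, h0, h1, h2, rfl⟩
  rintro c ⟨l, g0, -, -, rfl⟩
  exact Finset.sum_nonneg fun i _ => Finset.sum_nonneg fun j _ => mul_nonneg (g0 i j) (hd0 i j)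

theorem aux_le_W1 {S₁ S₂ : Type*} [Fintype S₁] [Fintype S₂]
    (P : S₁ → ℝ) (Q : S₂ → ℝ) (d : S₁ → S₂ → ℝ)
    (hP0 : ∀ i, 0 ≤ P i) (hP : ∑ i, P i = 1) (hQ0 : ∀ i, 0 ≤ Q i) (hQ : ∑ i, Q i = 1) (x : ℝ)
    (H : ∀ lam : S₁ → S₂ → ℝ, (∀ i j, 0 ≤ lam i j) → (∀ i, ∑ j, lam i j = P i) →
    (∀ j, ∑ i, lam i j = Q j) → x ≤ ∑ i, ∑ j, lam i j * d i j) : x ≤ W1 P Q d := by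
  refine le_csInf ⟨_, fun i j => P i * Q j, fun i j => mul_nonneg (hP0 i) (hQ0 j), ?_, ?_, rfl⟩ ?_
  · intro i; rw [← Finset.mul_sum, hQ, mul_one]
  · intro i; rw [← Finset.sum_mul, hP, one_mul]
  · rintro c ⟨l, g0, g1, g2, rfl⟩
    exact H l g0 g1 g2

theorem aux_W1_pert {S₁ S₂ : Type*} [Fintype S₁] [Fintype S₂]
    (P P' : S₁ → ℝ) (Q Q' : S₂ → ℝ) (d d' : S₁ → S₂ → ℝ) (C e : ℝ)
    (hP0 : ∀ i, 0 ≤ P i) (hP0' : ∀ i, 0 ≤ P' i) (hP : ∑ i, P i = 1) (hP' : ∑ i, P' i = 1)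
    (hQ0 : ∀ i, 0 ≤ Q i) (hQ0' : ∀ i, 0 ≤ Q' i) (hQ : ∑ i, Q i = 1) (hQ' : ∑ i, Q' i = 1)
    (hd0 : ∀ i j, 0 ≤ d i j) (hdC : ∀ i j, d i j ≤ C) (hdd : ∀ i j, d i j ≤ d' i j + e) :
    W1 P Q d ≤ W1 P' Q' d' + (e + C / 2 * (∑ i, |P i - P' i| + ∑ i, |Q i - Q' i|)) := by
  rw [← sub_le_iff_le_add]
  refine aux_le_W1 _ _ _ hP0' hP' hQ0' hQ' _ fun l g0 g1 g2 => ?_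
  obtain ⟨m, k0, k1, k2, k3⟩ := aux_coupling P P' Q' d C hP0 hP0' hP hP' hd0 hdC l g0 g1 g2
  obtain ⟨n, n0, n1, n2, n3⟩ := aux_coupling Q Q' P (fun j i => d i j) C hQ0 hQ0' hQ hQ'
    (fun _ _ => hd0 _ _) (fun _ _ => hdC _ _) (fun j i => m i j) (fun _ _ => k0 _ _) k2 k1
  have w := aux_W1_le P Q d hd0 (fun i j => n j i) (fun _ _ => n0 _ _) n2 n1
  rw [Finset.sum_comm, Finset.sum_comm (f := fun j i => m i j * d i j)] at n3
  have key : ∑ i, ∑ j, l i j * d i j ≤ ∑ i, ∑ j, l i j * d' i j + e := by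
    have : e = ∑ i, ∑ j, l i j * e := by
      simp only [← Finset.sum_mul, g1, hP', one_mul]
    rw [this, ← Finset.sum_add_distrib]
    refine Finset.sum_le_sum fun i _ => ?_
    rw [← Finset.sum_add_distrib]
    refine Finset.sum_le_sum fun j _ => ?_
    rw [← mul_add]
    exact mul_le_mul_of_nonneg_left (hdd i j) (g0 i j)
  linarith

theorem aux_W1_bound {S₁ S₂ : Type*} [Fintype S₁] [Fintype S₂]
    (P : S₁ → ℝ) (Q : S₂ → ℝ) (d : S₁ → S₂ → ℝ) (C : ℝ)
    (hP0 : ∀ i, 0 ≤ P i) (hP : ∑ i, P i = 1) (hQ0 : ∀ i, 0 ≤ Q i) (hQ : ∑ i, Q i = 1)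
    (hd0 : ∀ i j, 0 ≤ d i j) (hdC : ∀ i j, d i j ≤ C) : 0 ≤ W1 P Q d ∧ W1 P Q d ≤ C := by
  constructor
  · refine aux_le_W1 _ _ _ hP0 hP hQ0 hQ _ fun l g0 _ _ => ?_
    exact Finset.sum_nonneg fun i _ => Finset.sum_nonneg fun j _ => mul_nonneg (g0 i j) (hd0 i j)
  · refine (aux_W1_le P Q d hd0 (fun i j => P i * Q j) (fun i j => mul_nonneg (hP0 i) (hQ0 j))
      ?_ ?_).trans ?_
    · intro i; rw [← Finset.mul_sum, hQ, mul_one]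
    · intro i; rw [← Finset.sum_mul, hP, one_mul]
    · calc _ ≤ ∑ i, ∑ j, P i * Q j * C := Finset.sum_le_sum fun i _ => Finset.sum_le_sum fun j _ =>
            mul_le_mul_of_nonneg_left (hdC i j) (mul_nonneg (hP0 i) (hQ0 j))
        _ = C := by simp only [← Finset.sum_mul, ← Finset.mul_sum, hQ, mul_one, hP, one_mul]

theorem aux_sup {ι : Type*} [Finite ι] [Nonempty ι] (f g : ι → ℝ) (e : ℝ)
    (h : ∀ i, f i ≤ g i + e) : (⨆ i, f i) ≤ (⨆ i, g i) + e :=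
  ciSup_le fun i => (h i).trans
    (by linarith [le_ciSup (f := g) (Set.finite_range g).bddAbove i])

theorem aux_inf {ι : Type*} [Finite ι] [Nonempty ι] (f g : ι → ℝ) (e : ℝ)
    (h : ∀ i, f i ≤ g i + e) : (⨅ i, f i) ≤ (⨅ i, g i) + e := by
  rw [← sub_le_iff_le_add]
  exact le_ciInf fun i => by
    linarith [h i, ciInf_le (f := f) (Set.finite_range f).bddBelow i]

theorem aux_H {A B : Type*} [Finite A] [Finite B] [Nonempty A] [Nonempty B]
    (f g : A → B → ℝ) (e : ℝ) (h : ∀ i j, f i j ≤ g i j + e) :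
    max (⨆ a, ⨅ b, f a b) (⨅ a, ⨆ b, f a b) ≤ max (⨆ a, ⨅ b, g a b) (⨅ a, ⨆ b, g a b) + e := by
  rw [← max_add_add_right]
  exact max_le_max (aux_sup _ _ _ fun i => aux_inf _ _ _ (h i))
    (aux_inf _ _ _ fun i => aux_sup _ _ _ (h i))

theorem aux_F_bound [Nonempty A₁] [Nonempty A₂]
    (M₁ : FinMDP S₁ A₁) (M₂ : FinMDP S₂ A₂) (γ Rbar : ℝ)
    (hγ0 : 0 ≤ γ) (hγ1 : γ < 1)
    (hR₁ : ∀ s a, 0 ≤ M₁.R s a ∧ M₁.R s a ≤ Rbar)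
    (hR₂ : ∀ s a, 0 ≤ M₂.R s a ∧ M₂.R s a ≤ Rbar) (d : S₁ → S₂ → ℝ)
    (hd : ∀ s s', 0 ≤ d s s' ∧ d s s' ≤ Rbar / (1 - γ)) (s : S₁) (s' : S₂) :
    0 ≤ gbsmF M₁ M₂ γ d s s' ∧ gbsmF M₁ M₂ γ d s s' ≤ Rbar / (1 - γ) := by
  have hw := fun a a' => aux_W1_bound (M₁.P s a) (M₂.P s' a') d (Rbar / (1 - γ))
    (M₁.P_nonneg s a) (M₁.P_sum s a) (M₂.P_nonneg s' a') (M₂.P_sum s' a')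
    (fun i j => (hd i j).1) (fun i j => (hd i j).2)
  constructor
  · have := aux_H (fun _ _ => 0) (gbsmDelta M₁ M₂ γ d s · s' ·) 0 (by
      intro a a'
      have := mul_nonneg hγ0 (hw a a').1
      simp only [gbsmDelta]
      positivity)
    simpa [gbsmF] using this
  · have := aux_H (gbsmDelta M₁ M₂ γ d s · s' ·) (fun _ _ => 0) (Rbar / (1 - γ)) (by
      intro a a'
      have h1 := mul_le_mul_of_nonneg_left (hw a a').2 hγ0
      have h2 : |M₁.R s a - M₂.R s' a'| ≤ Rbar :=
        abs_le.2 ⟨by linarith [(hR₁ s a).1, (hR₂ s' a').2], by linarith [(hR₁ s a).2, (hR₂ s' a').1]⟩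
      have h3 : Rbar + γ * (Rbar / (1 - γ)) = Rbar / (1 - γ) := by
        have : 1 - γ ≠ 0 := by linarith
        field_simp; ring
      simp only [gbsmDelta]
      linarith)
    simpa [gbsmF] using this

theorem aux_iter_bound [Nonempty A₁] [Nonempty A₂]
    (M₁ : FinMDP S₁ A₁) (M₂ : FinMDP S₂ A₂) (γ Rbar : ℝ)
    (hγ0 : 0 ≤ γ) (hγ1 : γ < 1) (hRbar : 0 < Rbar)
    (hR₁ : ∀ s a, 0 ≤ M₁.R s a ∧ M₁.R s a ≤ Rbar)
    (hR₂ : ∀ s a, 0 ≤ M₂.R s a ∧ M₂.R s a ≤ Rbar) (n : ℕ) (s : S₁) (s' : S₂) :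
    0 ≤ (gbsmF M₁ M₂ γ)^[n] (fun _ _ => 0) s s' ∧
      (gbsmF M₁ M₂ γ)^[n] (fun _ _ => 0) s s' ≤ Rbar / (1 - γ) := by
  induction n generalizing s s' with
  | zero => exact ⟨le_rfl, div_nonneg hRbar.le (by linarith)⟩
  | succ n ih =>
    rw [Function.iterate_succ_apply']
    exact aux_F_bound M₁ M₂ γ Rbar hγ0 hγ1 hR₁ hR₂ _ ih s s'

theorem aux_gbsm [Nonempty A₁] [Nonempty A₂]
    (M₁ M₁hat : FinMDP S₁ A₁) (M₂ M₂hat : FinMDP S₂ A₂) (γ Rbar : ℝ)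
    (hγ0 : 0 ≤ γ) (hγ1 : γ < 1) (hRbar : 0 < Rbar)
    (hR₁ : ∀ s a, 0 ≤ M₁.R s a ∧ M₁.R s a ≤ Rbar)
    (hR₂ : ∀ s a, 0 ≤ M₂.R s a ∧ M₂.R s a ≤ Rbar)
    (hRhat₁ : M₁hat.R = M₁.R) (hRhat₂ : M₂hat.R = M₂.R) (D₁ D₂ : ℝ)
    (hD₁ : ∀ s a, ∑ t, |M₁.P s a t - M₁hat.P s a t| ≤ D₁)
    (hD₂ : ∀ s a, ∑ t, |M₂.P s a t - M₂hat.P s a t| ≤ D₂)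
    (hD : 0 ≤ D₁ + D₂) (s : S₁) (s' : S₂) :
    gbsm M₁ M₂ γ s s' ≤ gbsm M₁hat M₂hat γ s s' + γ * Rbar / (2 * (1 - γ) ^ 2) * (D₁ + D₂) := by
  have hg : 0 < 1 - γ := by linarith
  have hb := aux_iter_bound M₁ M₂ γ Rbar hγ0 hγ1 hRbar hR₁ hR₂
  have hb' := aux_iter_bound M₁hat M₂hat γ Rbar hγ0 hγ1 hRbar (hRhat₁ ▸ hR₁) (hRhat₂ ▸ hR₂)
  have key : ∀ n s s', (gbsmF M₁ M₂ γ)^[n] (fun _ _ => 0) s s' ≤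
      (gbsmF M₁hat M₂hat γ)^[n] (fun _ _ => 0) s s' +
        γ * Rbar / (2 * (1 - γ) ^ 2) * (D₁ + D₂) := by
    intro n
    induction n with
    | zero =>
      intro s s'
      simp only [Function.iterate_zero, id_eq, zero_add]
      positivity
    | succ n ih =>
      intro s s'
      rw [Function.iterate_succ_apply', Function.iterate_succ_apply']
      refine aux_H _ _ _ fun a a' => ?_
      have w := aux_W1_pert (M₁.P s a) (M₁hat.P s a) (M₂.P s' a') (M₂hat.P s' a') _ _
        (Rbar / (1 - γ)) _ (M₁.P_nonneg s a) (M₁hat.P_nonneg s a) (M₁.P_sum s a)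
        (M₁hat.P_sum s a) (M₂.P_nonneg s' a') (M₂hat.P_nonneg s' a') (M₂.P_sum s' a')
        (M₂hat.P_sum s' a') (fun i j => (hb n i j).1) (fun i j => (hb n i j).2) ih
      have w2 : Rbar / (1 - γ) / 2 * (∑ t, |M₁.P s a t - M₁hat.P s a t| +
          ∑ t, |M₂.P s' a' t - M₂hat.P s' a' t|) ≤ Rbar / (1 - γ) / 2 * (D₁ + D₂) :=
        mul_le_mul_of_nonneg_left (add_le_add (hD₁ s a) (hD₂ s' a')) (by positivity)
      have w3 := mul_le_mul_of_nonneg_left (w.trans (add_le_add_right (add_le_add_right w2 _) _)) hγ0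
      have w4 : γ * (γ * Rbar / (2 * (1 - γ) ^ 2) * (D₁ + D₂) + Rbar / (1 - γ) / 2 * (D₁ + D₂))
          = γ * Rbar / (2 * (1 - γ) ^ 2) * (D₁ + D₂) := by
        field_simp; ring
      rw [mul_add, w4] at w3
      simp only [gbsmDelta, hRhat₁, hRhat₂]
      linarith
  refine ciSup_le fun n => (key n s s').trans ?_
  have : BddAbove (Set.range fun n => (gbsmF M₁hat M₂hat γ)^[n] (fun _ _ => 0) s s') :=
    ⟨Rbar / (1 - γ), by rintro _ ⟨n, rfl⟩; exact (hb' n s s').2⟩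
  have := le_ciSup this n
  simp only [gbsm]
  linarith

/-- explicit total-variation based estimation error bound. -/
theorem ssa_estimation_error_bound_tv
    [Nonempty S₁] [Nonempty A₁] [Nonempty S₂] [Nonempty A₂]
    (M₁ M₁hat : FinMDP S₁ A₁) (M₂ M₂hat : FinMDP S₂ A₂) (γ Rbar : ℝ)
    (hγ0 : 0 ≤ γ) (hγ1 : γ < 1) (hRbar : 0 < Rbar)
    (hR₁ : ∀ s a, 0 ≤ M₁.R s a ∧ M₁.R s a ≤ Rbar)
    (hR₂ : ∀ s a, 0 ≤ M₂.R s a ∧ M₂.R s a ≤ Rbar)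
    (hRhat₁ : M₁hat.R = M₁.R) (hRhat₂ : M₂hat.R = M₂.R) :
    (⨆ s : S₁, ⨆ s' : S₂, |gbsm M₁ M₂ γ s s' - gbsm M₁hat M₂hat γ s s'|) ≤
      γ * Rbar / (2 * (1 - γ) ^ 2) *
        ((⨆ s : S₁, ⨆ a : A₁, ∑ t, |M₁.P s a t - M₁hat.P s a t|) +
          ⨆ s' : S₂, ⨆ a : A₂, ∑ t, |M₂.P s' a t - M₂hat.P s' a t|) := by
  have hD₁ : ∀ s a, ∑ t, |M₁.P s a t - M₁hat.P s a t| ≤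
      ⨆ s : S₁, ⨆ a : A₁, ∑ t, |M₁.P s a t - M₁hat.P s a t| := fun s a =>
    (le_ciSup (f := fun a => ∑ t, |M₁.P s a t - M₁hat.P s a t|)
      (Set.finite_range _).bddAbove a).trans
      (le_ciSup (f := fun s => ⨆ a : A₁, ∑ t, |M₁.P s a t - M₁hat.P s a t|)
        (Set.finite_range _).bddAbove s)
  have hD₂ : ∀ s a, ∑ t, |M₂.P s a t - M₂hat.P s a t| ≤
      ⨆ s : S₂, ⨆ a : A₂, ∑ t, |M₂.P s a t - M₂hat.P s a t| := fun s a =>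
    (le_ciSup (f := fun a => ∑ t, |M₂.P s a t - M₂hat.P s a t|)
      (Set.finite_range _).bddAbove a).trans
      (le_ciSup (f := fun s => ⨆ a : A₂, ∑ t, |M₂.P s a t - M₂hat.P s a t|)
        (Set.finite_range _).bddAbove s)
  have hD : 0 ≤ (⨆ s : S₁, ⨆ a : A₁, ∑ t, |M₁.P s a t - M₁hat.P s a t|) +
          ⨆ s' : S₂, ⨆ a : A₂, ∑ t, |M₂.P s' a t - M₂hat.P s' a t| :=
    add_nonneg (Real.iSup_nonneg fun s => Real.iSup_nonneg fun a =>
        Finset.sum_nonneg fun _ _ => abs_nonneg _)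
      (Real.iSup_nonneg fun s => Real.iSup_nonneg fun a =>
        Finset.sum_nonneg fun _ _ => abs_nonneg _)
  refine ciSup_le fun s => ciSup_le fun s' => ?_
  have h1 := aux_gbsm M₁ M₁hat M₂ M₂hat γ Rbar hγ0 hγ1 hRbar hR₁ hR₂ hRhat₁ hRhat₂ _ _
    hD₁ hD₂ hD s s'
  have h2 := aux_gbsm M₁hat M₁ M₂hat M₂ γ Rbar hγ0 hγ1 hRbar (hRhat₁ ▸ hR₁) (hRhat₂ ▸ hR₂)
    hRhat₁.symm hRhat₂.symm _ _
    (fun s a => by simpa only [abs_sub_comm] using hD₁ s a)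
    (fun s a => by simpa only [abs_sub_comm] using hD₂ s a) hD s s'
  rw [abs_le]
  constructor <;> linarith

end
end
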